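/- Let μ be a DNS satisfaction function and let I be a PB instance with budget b, minimum project cost c_min and maximum project cost c_max. Let P_G be the outcome of Greedy_μ on I and let P_M be the outcome of MES_μ completed by Greedy_μ on I, where both rules break ties according to the same fixed linear order on projects. Then uw_μ(P_M) ≥ (2·√(c_min/b) − (c_min + c_max)/b) · uw_μ(P_G). -/

import Mathlib

open Finset
open scoped Classical

noncomputable section

/-- A participatory budgeting (PB) instance. -/
structure PB (π ν : Type) where
  projs : Finset π
  voters : Finset ν
  approves : ν → Finset π
  cost : π → ℝ
  budget : ℝ
  projs_nonempty : projs.Nonempty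
  budget_pos : 0 < budget
  cost_pos : ∀ p ∈ projs, 0 < cost p
  cost_le_budget : ∀ p ∈ projs, cost p ≤ budget
  approves_subset : ∀ i ∈ voters, approves i ⊆ projs

/-- A satisfaction function assigns a positive value to each positive cost. -/
def IsSat (μ : ℝ → ℝ) : Prop := ∀ t : ℝ, 0 < t → 0 < μ t

/-- A DNS function: weakly increasing, with weakly decreasing satisfaction per unit cost. -/
def IsDNS (μ : ℝ → ℝ) : Prop :=
  IsSat μ ∧ (∀ s t : ℝ, 0 < s → s ≤ t → μ s ≤ μ t) ∧
    (∀ s t : ℝ, 0 < s → s ≤ t → μ t / t ≤ μ s / s)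

namespace PB

variable {π ν : Type}

/-- Supporters of a project. -/
def supp (I : PB π ν) (p : π) : Finset ν := I.voters.filter (fun i => p ∈ I.approves i)

/-- Total cost of a set of projects. -/
def costOf (I : PB π ν) (S : Finset π) : ℝ := ∑ p ∈ S, I.cost p

/-- A feasible outcome. -/
def feasibleSet (I : PB π ν) (S : Finset π) : Prop := S ⊆ I.projs ∧ I.costOf S ≤ I.budget

/-- Minimum project cost. -/
def cmin (I : PB π ν) : ℝ := I.projs.inf' I.projs_nonempty I.cost

/-- Maximum project cost. -/
def cmax (I : PB π ν) : ℝ := I.projs.sup' I.projs_nonempty I.cost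

/-- Utilitarian welfare of a set of projects. -/
def uw (I : PB π ν) (μ : ℝ → ℝ) (S : Finset π) : ℝ :=
  ∑ p ∈ S, ((I.supp p).card : ℝ) * μ (I.cost p)

/-- The value ("bang per buck") of a project. -/
def projVal (I : PB π ν) (μ : ℝ → ℝ) (p : π) : ℝ :=
  ((I.supp p).card : ℝ) * μ (I.cost p) / I.cost p

/-- Satisfaction of voter `i` from an outcome. -/
def satOf (I : PB π ν) (μ : ℝ → ℝ) (i : ν) (S : Finset π) : ℝ :=
  ∑ p ∈ S ∩ I.approves i, μ (I.cost p)

/-- Minimum satisfaction of a project in the instance. -/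
def muMin (I : PB π ν) (μ : ℝ → ℝ) : ℝ :=
  I.projs.inf' I.projs_nonempty (fun p => μ (I.cost p))

/-- Maximum satisfaction of a project in the instance. -/
def muMax (I : PB π ν) (μ : ℝ → ℝ) : ℝ :=
  I.projs.sup' I.projs_nonempty (fun p => μ (I.cost p))

/-- The maximal utilitarian welfare over feasible outcomes. -/
def maxUW (I : PB π ν) (μ : ℝ → ℝ) : ℝ :=
  (I.projs.powerset.filter (fun S => I.costOf S ≤ I.budget)).sup'
    ⟨∅, Finset.mem_filter.mpr ⟨Finset.empty_mem_powerset _,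
      by simpa [PB.costOf] using I.budget_pos.le⟩⟩
    (I.uw μ)

/-- A group `N'` is `T`-cohesive. -/
def cohesive (I : PB π ν) (N' : Finset ν) (T : Finset π) : Prop :=
  N' ⊆ I.voters ∧ T ⊆ I.projs ∧ (∀ i ∈ N', T ⊆ I.approves i) ∧
    I.costOf T ≤ ((N'.card : ℝ) / (I.voters.card : ℝ)) * I.budget

/-- Extended justified representation up to one project w.r.t. `μ`. -/
def EJR1 (I : PB π ν) (μ : ℝ → ℝ) (W : Finset π) : Prop :=
  ∀ N' T, I.cohesive N' T →
    T ⊆ W ∨ ∃ i ∈ N', ∃ p ∈ I.approves i, p ∉ W ∧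
      I.satOf μ i W + μ (I.cost p) > I.satOf μ i T

/-- Pick the element of maximal `f`-value, breaking ties by the linear order. -/
def pickMax [LinearOrder π] (f : π → ℝ) (S : Finset π) (h : S.Nonempty) : π :=
  (S.filter (fun p => ∀ q ∈ S, f q ≤ f p)).min' (by
    obtain ⟨p, hp, hm⟩ := S.exists_max_image f h
    exact ⟨p, Finset.mem_filter.mpr ⟨hp, hm⟩⟩)

/-- Pick the element of minimal `f`-value, breaking ties by the linear order. -/
def pickMin [LinearOrder π] (f : π → ℝ) (S : Finset π) (h : S.Nonempty) : π :=
  (S.filter (fun p => ∀ q ∈ S, f p ≤ f q)).min' (by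
    obtain ⟨p, hp, hm⟩ := S.exists_min_image f h
    exact ⟨p, Finset.mem_filter.mpr ⟨hp, hm⟩⟩)

section Greedy

variable [LinearOrder π]

/-- One choice of the greedy rule: among the unchosen affordable projects, the one of
maximum value (ties broken by the linear order); `none` if no project is affordable. -/
def greedyStep (I : PB π ν) (μ : ℝ → ℝ) (rem : Finset π) (budg : ℝ) : Option π :=
  if h : (rem.filter (fun p => I.cost p ≤ budg)).Nonempty then
    some (pickMax (I.projVal μ) (rem.filter (fun p => I.cost p ≤ budg)) h)
  else none

/-- The (ordered) list of projects chosen by the greedy rule, with fuel. -/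
def greedyAux (I : PB π ν) (μ : ℝ → ℝ) : ℕ → Finset π → ℝ → List π
  | 0, _, _ => []
  | (k+1), rem, budg =>
    match I.greedyStep μ rem budg with
    | none => []
    | some p => p :: greedyAux I μ k (rem.erase p) (budg - I.cost p)

/-- The projects chosen by `Greedy_μ`, in order of selection. -/
def greedySeq (I : PB π ν) (μ : ℝ → ℝ) : List π :=
  greedyAux I μ I.projs.card I.projs I.budget

/-- The outcome of the greedy rule started from a set `rem` of unchosen projects
with remaining budget `budg`. -/
def greedyFrom (I : PB π ν) (μ : ℝ → ℝ) (rem : Finset π) (budg : ℝ) : Finset π :=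
  (greedyAux I μ rem.card rem budg).toFinset

/-- The outcome of `Greedy_μ`. -/
def greedy (I : PB π ν) (μ : ℝ → ℝ) : Finset π := (I.greedySeq μ).toFinset

/-- The state (unchosen projects, remaining budget) of `Greedy_μ` after `k` stages. -/
def greedyStateAux (I : PB π ν) (μ : ℝ → ℝ) : ℕ → Finset π × ℝ
  | 0 => (I.projs, I.budget)
  | (k+1) =>
    match I.greedyStep μ (greedyStateAux I μ k).1 (greedyStateAux I μ k).2 with
    | none => greedyStateAux I μ k
    | some p => ((greedyStateAux I μ k).1.erase p, (greedyStateAux I μ k).2 - I.cost p)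

/-- The project chosen by `Greedy_μ` at stage `k+1` (i.e. after `k` stages), if any. -/
def greedyChoice (I : PB π ν) (μ : ℝ → ℝ) (k : ℕ) : Option π :=
  I.greedyStep μ (I.greedyStateAux μ k).1 (I.greedyStateAux μ k).2

end Greedy

section MES

variable [LinearOrder π]

/-- The set of values `ρ ≥ 0` at which project `p` can be bought given voter budgets `bud`. -/
def rhoSet (I : PB π ν) (μ : ℝ → ℝ) (bud : ν → ℝ) (p : π) : Set ℝ :=
  {ρ : ℝ | 0 ≤ ρ ∧ ∑ i ∈ I.supp p, min (bud i) (ρ * μ (I.cost p)) = I.cost p}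

/-- `ρ(p)`: the least `ρ ≥ 0` at which `p` can be bought (junk value if none exists). -/
def rho (I : PB π ν) (μ : ℝ → ℝ) (bud : ν → ℝ) (p : π) : ℝ := sInf (I.rhoSet μ bud p)

/-- One choice of MES: among the unchosen projects with `ρ(p) < ∞`, one minimizing `ρ(p)`
(ties broken by the linear order); `none` if no project can be bought. -/
def mesStep (I : PB π ν) (μ : ℝ → ℝ) (rem : Finset π) (bud : ν → ℝ) : Option π :=
  if h : (rem.filter (fun p => (I.rhoSet μ bud p).Nonempty)).Nonempty then
    some (pickMin (I.rho μ bud) (rem.filter (fun p => (I.rhoSet μ bud p).Nonempty)) h)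
  else none

/-- Voter budgets after the supporters of `p` pay for it. -/
def mesPay (I : PB π ν) (μ : ℝ → ℝ) (bud : ν → ℝ) (p : π) : ν → ℝ :=
  fun i => if i ∈ I.supp p then bud i - min (bud i) (I.rho μ bud p * μ (I.cost p)) else bud i

/-- The state (unchosen projects, voter budgets) of `MES_μ` after `k` stages. -/
def mesStateAux (I : PB π ν) (μ : ℝ → ℝ) : ℕ → Finset π × (ν → ℝ)
  | 0 => (I.projs, fun _ => I.budget / (I.voters.card : ℝ))
  | (k+1) =>
    match I.mesStep μ (mesStateAux I μ k).1 (mesStateAux I μ k).2 with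
    | none => mesStateAux I μ k
    | some p => ((mesStateAux I μ k).1.erase p, I.mesPay μ (mesStateAux I μ k).2 p)

/-- The project chosen by `MES_μ` at stage `k+1` (i.e. after `k` stages), if any. -/
def mesChoice (I : PB π ν) (μ : ℝ → ℝ) (k : ℕ) : Option π :=
  I.mesStep μ (I.mesStateAux μ k).1 (I.mesStateAux μ k).2

/-- The final state of `MES_μ`. -/
def mesFinal (I : PB π ν) (μ : ℝ → ℝ) : Finset π × (ν → ℝ) :=
  I.mesStateAux μ I.projs.card

/-- The outcome of `MES_μ`. -/
def mesOutcome (I : PB π ν) (μ : ℝ → ℝ) : Finset π := I.projs \ (I.mesFinal μ).1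

/-- The outcome of `MES_μ` completed by `Greedy_μ`: run MES, then greedy on the unchosen
projects with the remaining total budget. -/
def completedMES (I : PB π ν) (μ : ℝ → ℝ) : Finset π :=
  I.mesOutcome μ ∪
    I.greedyFrom μ (I.mesFinal μ).1 (I.budget - I.costOf (I.mesOutcome μ))

/-- Voter `i` is budget-limited for project `p` after `k` stages of `MES_μ`:
`p` is unchosen and approved by `i`, affordable from the total remaining budget,
but an equal split of its cost exceeds `i`'s personal budget. -/
def budgetLimitedAt (I : PB π ν) (μ : ℝ → ℝ) (k : ℕ) (i : ν) (p : π) : Prop :=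
  i ∈ I.voters ∧ p ∈ (I.mesStateAux μ k).1 ∧ p ∈ I.approves i ∧
    I.cost p ≤ ∑ j ∈ I.voters, (I.mesStateAux μ k).2 j ∧
    (I.mesStateAux μ k).2 i < I.cost p / ((I.supp p).card : ℝ)

end MES

/-- Total cost of a list of projects. -/
def listCost (I : PB π ν) (L : List π) : ℝ := (L.map I.cost).sum

/-- Total utilitarian welfare of a list of projects. -/
def listUW (I : PB π ν) (μ : ℝ → ℝ) (L : List π) : ℝ :=
  (L.map (fun p => ((I.supp p).card : ℝ) * μ (I.cost p))).sum

end PB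

/-!
Let `X` be the outcome of completed MES and `S` any feasible set, and cap all values at `v`, the
largest value of a project `p ∈ S \ X`. Capping removes at least as much welfare from `X` as from
`S`, and the capped welfare of `S` is at most `v * b`, so it suffices that the capped welfare of
`X` is at least the claimed fraction of `v * b`.

As long as every supporter of `p` could still pay an equal share of `c(p)`, MES buys only projects
of value at least `v`, and at a price `ρ ≤ 1 / v`. When some supporter first cannot, that voter has
spent almost all of `b / n` at this price, so by DNS the set `H` bought so far satisfies
`v * b ≤ n * μ(c_min) / c_min * (c(H) + c(p))`. Every later purchase of MES has value at least
`n * μ(c_min) / b`, and greedy picks projects of value at least `v` until less than `c(p)` is left.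
Minimising the resulting lower bound by AM-GM yields the square root.
-/

lemma mul_two_mul_sub_sq_le {K v : ℝ} (hK : 0 < K) (hv : 0 ≤ v) (r : ℝ) :
    v * (2 * r - r ^ 2) ≤ (v - min v (K * r ^ 2)) * (v / K) + min v (K * r ^ 2) := by
  rcases min_choice v (K * r ^ 2) with hmin | hmin <;> rw [hmin]
  · nlinarith [mul_nonneg hv (sq_nonneg (r - 1))]
  · have hsq : (v - K * r ^ 2) * (v / K) + K * r ^ 2 - v * (2 * r - r ^ 2) =
        (v - K * r) ^ 2 / K := by
      field_simp
      ring
    have : 0 ≤ (v - K * r) ^ 2 / K := by positivity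
    linarith

-- Minimise `v * x + t * (y - x) = (v - t) * x + t * y` over the admissible costs `x` and `y`.
lemma mul_sub_mul_le_of_costs {K v b c x y : ℝ} (hK : 0 < K) (hv : 0 ≤ v) (hb : 0 ≤ b) (r : ℝ)
    (hx : v * b ≤ K * (x + c)) (hy : b ≤ y + c) :
    v * (2 * r - r ^ 2) * b - v * c ≤ v * x + min v (K * r ^ 2) * (y - x) := by
  set t := min v (K * r ^ 2)
  have htv : 0 ≤ v - t := sub_nonneg.2 (min_le_left _ _)
  have ht : 0 ≤ t := le_min hv (by positivity)
  have hx' : v / K * b - c ≤ x := by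
    rw [div_mul_eq_mul_div, sub_le_iff_le_add, div_le_iff₀' hK]
    exact hx
  calc v * (2 * r - r ^ 2) * b - v * c
      ≤ ((v - t) * (v / K) + t) * b - v * c := by
        gcongr
        exact mul_two_mul_sub_sq_le hK hv r
    _ = (v - t) * (v / K * b - c) + t * (b - c) := by ring
    _ ≤ (v - t) * x + t * y :=
        add_le_add (mul_le_mul_of_nonneg_left hx' htv)
          (mul_le_mul_of_nonneg_left (sub_le_iff_le_add.2 hy) ht)
    _ = v * x + t * (y - x) := by ring

lemma two_mul_sqrt_sub_mul_le_of_costs {a m M v b c x y : ℝ} (ha : 0 < a) (hm : 0 < m)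
    (hv : 0 ≤ v) (hb : 0 < b) (hc : c ≤ M) (hx : v * b ≤ a / m * (x + c)) (hy : b ≤ y + c) :
    (2 * Real.sqrt (m / b) - (m + M) / b) * (v * b) ≤ v * x + min v (a / b) * (y - x) := by
  have hsq : Real.sqrt (m / b) ^ 2 = m / b := Real.sq_sqrt (div_pos hm hb).le
  have hcap : a / m * Real.sqrt (m / b) ^ 2 = a / b := by
    rw [hsq, div_mul_div_cancel₀ hm.ne']
  calc (2 * Real.sqrt (m / b) - (m + M) / b) * (v * b)
      = v * (2 * Real.sqrt (m / b) - Real.sqrt (m / b) ^ 2) * b - v * M := by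
        rw [hsq]
        field_simp
        ring
    _ ≤ v * (2 * Real.sqrt (m / b) - Real.sqrt (m / b) ^ 2) * b - v * c := by gcongr
    _ ≤ v * x + min v (a / b) * (y - x) :=
        hcap ▸ mul_sub_mul_le_of_costs (div_pos ha hm) hv hb.le _ hx hy

namespace PB

variable {π ν : Type} {I : PB π ν} {μ : ℝ → ℝ} {p q : π} {S X : Finset π} {v : ℝ}

lemma costOf_nonneg (hS : S ⊆ I.projs) : 0 ≤ I.costOf S :=
  Finset.sum_nonneg fun q hq => (I.cost_pos q (hS hq)).le

lemma costOf_insert [DecidableEq π] (hq : q ∉ S) :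
    I.costOf (insert q S) = I.cost q + I.costOf S :=
  Finset.sum_insert hq

lemma costOf_union [DecidableEq π] (h : Disjoint S X) :
    I.costOf (S ∪ X) = I.costOf S + I.costOf X :=
  Finset.sum_union h

lemma cmin_pos (I : PB π ν) : 0 < I.cmin :=
  (Finset.lt_inf'_iff _).2 I.cost_pos

lemma cmin_le_cost (hp : p ∈ I.projs) : I.cmin ≤ I.cost p :=
  Finset.inf'_le _ hp

lemma cost_le_cmax (hp : p ∈ I.projs) : I.cost p ≤ I.cmax :=
  Finset.le_sup' I.cost hp

lemma cmax_pos (I : PB π ν) : 0 < I.cmax :=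
  let ⟨_, hp⟩ := I.projs_nonempty
  (I.cost_pos _ hp).trans_le (cost_le_cmax hp)

lemma guarantee_le_one (I : PB π ν) :
    2 * Real.sqrt (I.cmin / I.budget) - (I.cmin + I.cmax) / I.budget ≤ 1 := by
  have hb := I.budget_pos
  have hsq := Real.sq_sqrt (div_nonneg I.cmin_pos.le hb.le)
  have hcmax := div_pos I.cmax_pos hb
  rw [add_div]
  nlinarith [sq_nonneg (Real.sqrt (I.cmin / I.budget) - 1)]

lemma supp_subset_voters : I.supp p ⊆ I.voters :=
  Finset.filter_subset _ _

lemma projVal_nonneg (hμ : IsSat μ) (hp : p ∈ I.projs) : 0 ≤ I.projVal μ p := by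
  have hc := I.cost_pos p hp
  have := hμ _ hc
  unfold projVal
  positivity

lemma projVal_pos (hμ : IsSat μ) (hp : p ∈ I.projs) (hsupp : (I.supp p).Nonempty) :
    0 < I.projVal μ p := by
  have hc := I.cost_pos p hp
  have := hμ _ hc
  have := hsupp.card_pos
  unfold projVal
  positivity

lemma projVal_mul_cost (hp : p ∈ I.projs) :
    I.projVal μ p * I.cost p = (I.supp p).card * μ (I.cost p) :=
  div_mul_cancel₀ _ (I.cost_pos p hp).ne'

lemma uw_eq_sum_projVal_mul_cost (hS : S ⊆ I.projs) :
    I.uw μ S = ∑ q ∈ S, I.projVal μ q * I.cost q :=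
  Finset.sum_congr rfl fun _ hq => (projVal_mul_cost (hS hq)).symm

lemma uw_nonneg (hμ : IsSat μ) (hS : S ⊆ I.projs) : 0 ≤ I.uw μ S :=
  Finset.sum_nonneg fun q hq => mul_nonneg (Nat.cast_nonneg _) (hμ _ (I.cost_pos q (hS hq))).le

lemma uw_le_uw_of_subset (hμ : IsSat μ) (hSX : S ⊆ X) (hX : X ⊆ I.projs) :
    I.uw μ S ≤ I.uw μ X :=
  Finset.sum_le_sum_of_subset_of_nonneg hSX fun q hq _ =>
    mul_nonneg (Nat.cast_nonneg _) (hμ _ (I.cost_pos q (hX hq))).le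

/-! ### Capped welfare -/

/-- The utilitarian welfare of `S` with the value of every project capped at `v`. Two outcomes
are compared at the cap `v = v_μ(p)` of a project `p` that one of them misses. -/
def cappedUW (I : PB π ν) (μ : ℝ → ℝ) (v : ℝ) (S : Finset π) : ℝ :=
  ∑ q ∈ S, min (I.projVal μ q) v * I.cost q

lemma cappedUW_le_mul_costOf (hS : S ⊆ I.projs) : I.cappedUW μ v S ≤ v * I.costOf S := by
  rw [costOf, Finset.mul_sum]
  exact Finset.sum_le_sum fun q hq =>
    mul_le_mul_of_nonneg_right (min_le_right _ _) (I.cost_pos q (hS hq)).le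

lemma cappedUW_le_uw (hS : S ⊆ I.projs) : I.cappedUW μ v S ≤ I.uw μ S := by
  rw [uw_eq_sum_projVal_mul_cost hS]
  exact Finset.sum_le_sum fun q hq =>
    mul_le_mul_of_nonneg_right (min_le_left _ _) (I.cost_pos q (hS hq)).le

lemma cappedUW_mono (hμ : IsSat μ) (hv : 0 ≤ v) (hSX : S ⊆ X) (hX : X ⊆ I.projs) :
    I.cappedUW μ v S ≤ I.cappedUW μ v X :=
  Finset.sum_le_sum_of_subset_of_nonneg hSX fun q hq _ =>
    mul_nonneg (le_min (projVal_nonneg hμ (hX hq)) hv) (I.cost_pos q (hX hq)).le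

lemma cappedUW_nonneg (hμ : IsSat μ) (hv : 0 ≤ v) (hS : S ⊆ I.projs) :
    0 ≤ I.cappedUW μ v S := by
  simpa [cappedUW] using cappedUW_mono hμ hv (Finset.empty_subset S) hS

lemma mul_costOf_add_mul_costOf_sub_le_cappedUW {H : Finset π} {t : ℝ} (hHS : H ⊆ S)
    (hS : S ⊆ I.projs) (htv : t ≤ v) (hH : ∀ q ∈ H, v ≤ I.projVal μ q)
    (ht : ∀ q ∈ S, t ≤ I.projVal μ q) :
    v * I.costOf H + t * (I.costOf S - I.costOf H) ≤ I.cappedUW μ v S := by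
  have hsdiff : I.costOf S - I.costOf H = I.costOf (S \ H) :=
    sub_eq_of_eq_add (Finset.sum_sdiff hHS).symm
  rw [hsdiff, cappedUW, ← Finset.sum_sdiff hHS, add_comm, costOf, costOf, Finset.mul_sum,
    Finset.mul_sum]
  refine add_le_add (Finset.sum_le_sum fun q hq => ?_) (Finset.sum_le_sum fun q hq => ?_)
  · have hqS := Finset.sdiff_subset hq
    exact mul_le_mul_of_nonneg_right (le_min (ht q hqS) htv) (I.cost_pos q (hS hqS)).le
  · exact mul_le_mul_of_nonneg_right (le_min (hH q hq) le_rfl) (I.cost_pos q (hS (hHS hq))).le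

lemma uw_sub_cappedUW_le (hS : S ⊆ I.projs) (hX : X ⊆ I.projs)
    (hv : ∀ q ∈ S, q ∉ X → I.projVal μ q ≤ v) :
    I.uw μ S - I.cappedUW μ v S ≤ I.uw μ X - I.cappedUW μ v X := by
  rw [uw_eq_sum_projVal_mul_cost hS, uw_eq_sum_projVal_mul_cost hX, cappedUW, cappedUW,
    ← Finset.sum_sub_distrib, ← Finset.sum_sub_distrib]
  have hexcess_nonneg : ∀ q ∈ X,
      0 ≤ I.projVal μ q * I.cost q - min (I.projVal μ q) v * I.cost q := fun q hq =>
    sub_nonneg.2 (mul_le_mul_of_nonneg_right (min_le_left _ _) (I.cost_pos q (hX hq)).le)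
  calc ∑ q ∈ S, (I.projVal μ q * I.cost q - min (I.projVal μ q) v * I.cost q)
      = ∑ q ∈ S ∩ X, (I.projVal μ q * I.cost q - min (I.projVal μ q) v * I.cost q) := by
        refine (Finset.sum_subset Finset.inter_subset_left fun q hq hqSX => ?_).symm
        have hqX : q ∉ X := fun h => hqSX (Finset.mem_inter.2 ⟨hq, h⟩)
        rw [min_eq_left (hv q hq hqX), sub_self]
    _ ≤ ∑ q ∈ X, (I.projVal μ q * I.cost q - min (I.projVal μ q) v * I.cost q) :=
        Finset.sum_le_sum_of_subset_of_nonneg Finset.inter_subset_right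
          fun q hq _ => hexcess_nonneg q hq

lemma mul_uw_le_uw_of_le_cappedUW {α : ℝ} (hμ : IsSat μ) (hα : α ≤ 1) (hX : X ⊆ I.projs)
    (hcap : ∀ p ∈ I.projs, p ∉ X →
      α * (I.projVal μ p * I.budget) ≤ I.cappedUW μ (I.projVal μ p) X)
    (hS : I.feasibleSet S) : α * I.uw μ S ≤ I.uw μ X := by
  obtain ⟨hSsub, hScost⟩ := hS
  have hS0 := uw_nonneg hμ hSsub
  rcases lt_or_ge α 0 with hα0 | hα0
  · exact (mul_nonpos_of_nonpos_of_nonneg hα0.le hS0).trans (uw_nonneg hμ hX)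
  by_cases hSX : S ⊆ X
  · exact (mul_le_of_le_one_left hS0 hα).trans (uw_le_uw_of_subset hμ hSX hX)
  obtain ⟨p, hpSX, hpmax⟩ :=
    (S \ X).exists_max_image (I.projVal μ) (Finset.sdiff_nonempty.2 hSX)
  obtain ⟨hpS, hpX⟩ := Finset.mem_sdiff.1 hpSX
  set v := I.projVal μ p
  have hexcess : I.uw μ S - I.cappedUW μ v S ≤ I.uw μ X - I.cappedUW μ v X :=
    uw_sub_cappedUW_le hSsub hX fun q hqS hqX => hpmax q (Finset.mem_sdiff.2 ⟨hqS, hqX⟩)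
  have hcapS : I.cappedUW μ v S ≤ v * I.budget :=
    (cappedUW_le_mul_costOf hSsub).trans
      (mul_le_mul_of_nonneg_left hScost (projVal_nonneg hμ (hSsub hpS)))
  calc α * I.uw μ S
      ≤ α * (v * I.budget + (I.uw μ X - I.cappedUW μ v X)) :=
        mul_le_mul_of_nonneg_left (by linarith) hα0
    _ = α * (v * I.budget) + α * (I.uw μ X - I.cappedUW μ v X) := mul_add _ _ _
    _ ≤ I.cappedUW μ v X + (I.uw μ X - I.cappedUW μ v X) :=
        add_le_add (hcap p (hSsub hpS) hpX)
          (mul_le_of_le_one_left (sub_nonneg.2 (cappedUW_le_uw hX)) hα)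
    _ = I.uw μ X := add_sub_cancel _ _

/-! ### Satisfaction per unit of cost -/

lemma mu_cost_le_mul_cost (hDNS : IsDNS μ) (hp : p ∈ I.projs) :
    μ (I.cost p) ≤ μ I.cmin / I.cmin * I.cost p :=
  (div_le_iff₀ (I.cost_pos p hp)).1 (hDNS.2.2 _ _ I.cmin_pos (cmin_le_cost hp))

lemma sum_mu_cost_le_mul_costOf (hDNS : IsDNS μ) (hS : S ⊆ I.projs) :
    ∑ q ∈ S, μ (I.cost q) ≤ μ I.cmin / I.cmin * I.costOf S := by
  rw [costOf, Finset.mul_sum]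
  exact Finset.sum_le_sum fun q hq => mu_cost_le_mul_cost hDNS (hS hq)

lemma card_voters_mul_div_budget_le_projVal (hDNS : IsDNS μ) (hp : p ∈ I.projs)
    (hcost : I.cost p * I.voters.card ≤ (I.supp p).card * I.budget) :
    I.voters.card * μ I.cmin / I.budget ≤ I.projVal μ p := by
  obtain ⟨hμ, hmono, -⟩ := hDNS
  have hμle := hmono _ _ I.cmin_pos (cmin_le_cost hp)
  have hμpos := hμ _ I.cmin_pos
  have hb := I.budget_pos
  rw [projVal, div_le_div_iff₀ hb (I.cost_pos p hp)]
  calc I.voters.card * μ I.cmin * I.cost p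
      = I.cost p * I.voters.card * μ I.cmin := by ring
    _ ≤ (I.supp p).card * I.budget * μ (I.cost p) := by gcongr
    _ = (I.supp p).card * μ (I.cost p) * I.budget := by ring

/-! ### Prices `ρ(p)` -/

section Price

variable {bud : ν → ℝ}

/-- The supporters of `p` can buy it from the personal budgets `bud` by paying equal shares: no
supporter is limited by their budget. -/
def EqualSplitAffordable (I : PB π ν) (bud : ν → ℝ) (p : π) : Prop :=
  ∀ i ∈ I.supp p, I.cost p / (I.supp p).card ≤ bud i

lemma rho_nonneg : 0 ≤ I.rho μ bud p :=
  Real.sInf_nonneg fun _ h => h.1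

lemma EqualSplitAffordable.inv_projVal_mem_rhoSet (h : I.EqualSplitAffordable bud p)
    (hμ : IsSat μ) (hp : p ∈ I.projs) (hsupp : (I.supp p).Nonempty) :
    (I.projVal μ p)⁻¹ ∈ I.rhoSet μ bud p := by
  have hμpos := hμ _ (I.cost_pos p hp)
  have hcard : (0 : ℝ) < (I.supp p).card := Nat.cast_pos.2 hsupp.card_pos
  have hshare : (I.projVal μ p)⁻¹ * μ (I.cost p) = I.cost p / (I.supp p).card := by
    rw [projVal]
    field_simp
  refine ⟨inv_nonneg.2 (projVal_nonneg hμ hp), ?_⟩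
  rw [hshare, Finset.sum_congr rfl fun i hi => min_eq_right (h i hi), Finset.sum_const,
    nsmul_eq_mul, mul_div_cancel₀ _ hcard.ne']

lemma EqualSplitAffordable.rho_le_inv_projVal (h : I.EqualSplitAffordable bud p)
    (hμ : IsSat μ) (hp : p ∈ I.projs) (hsupp : (I.supp p).Nonempty) :
    I.rho μ bud p ≤ (I.projVal μ p)⁻¹ :=
  csInf_le ⟨0, fun _ h => h.1⟩ (h.inv_projVal_mem_rhoSet hμ hp hsupp)

lemma one_le_projVal_mul_of_mem_rhoSet (hp : p ∈ I.projs) {r : ℝ} (hr : r ∈ I.rhoSet μ bud p) :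
    1 ≤ I.projVal μ p * r := by
  have hsum : I.cost p ≤ (I.supp p).card * (r * μ (I.cost p)) := by
    rw [← nsmul_eq_mul]
    exact hr.2.symm.le.trans (Finset.sum_le_card_nsmul _ _ _ fun i _ => min_le_right _ _)
  rw [projVal, div_mul_eq_mul_div, one_le_div (I.cost_pos p hp)]
  linarith

lemma projVal_pos_of_rhoSet_nonempty (hp : p ∈ I.projs) (h : (I.rhoSet μ bud p).Nonempty) :
    0 < I.projVal μ p :=
  let ⟨_, hr⟩ := h
  pos_of_mul_pos_left (one_pos.trans_le (one_le_projVal_mul_of_mem_rhoSet hp hr)) hr.1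

lemma inv_projVal_le_rho (hp : p ∈ I.projs) (h : (I.rhoSet μ bud p).Nonempty) :
    (I.projVal μ p)⁻¹ ≤ I.rho μ bud p :=
  le_csInf h fun _ hr => (inv_le_iff_one_le_mul₀' (projVal_pos_of_rhoSet_nonempty hp h)).2
    (one_le_projVal_mul_of_mem_rhoSet hp hr)

lemma cost_le_card_supp_mul_of_rhoSet_nonempty {B : ℝ} (h : (I.rhoSet μ bud p).Nonempty)
    (hB : ∀ i, bud i ≤ B) : I.cost p ≤ (I.supp p).card * B := by
  obtain ⟨r, -, hr⟩ := h
  rw [← hr, ← nsmul_eq_mul]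
  exact Finset.sum_le_card_nsmul _ _ _ fun i _ => (min_le_left _ _).trans (hB i)

lemma mesPay_nonneg {i : ν} (hi : 0 ≤ bud i) : 0 ≤ I.mesPay μ bud p i := by
  rw [mesPay]
  split_ifs
  · exact sub_nonneg.2 (min_le_left _ _)
  · exact hi

lemma mesPay_le {i : ν} (hi : 0 ≤ bud i) (hμp : 0 ≤ μ (I.cost p)) :
    I.mesPay μ bud p i ≤ bud i := by
  rw [mesPay]
  split_ifs
  · exact sub_le_self _ (le_min hi (mul_nonneg rho_nonneg hμp))
  · exact le_rfl

lemma sub_mesPay_le (i : ν) (hμp : 0 ≤ μ (I.cost p)) :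
    bud i - I.mesPay μ bud p i ≤ I.rho μ bud p * μ (I.cost p) := by
  rw [mesPay]
  split_ifs
  · exact (sub_sub_cancel _ _).trans_le (min_le_right _ _)
  · exact (sub_self _).trans_le (mul_nonneg rho_nonneg hμp)

/-- `q` is a legitimate choice of a stage of `MES_μ` at which the projects `rem` are unchosen and
the personal budgets are `bud`, up to tie-breaking. -/
structure IsMESChoice (I : PB π ν) (μ : ℝ → ℝ) (rem : Finset π) (bud : ν → ℝ) (q : π) :
    Prop where
  mem : q ∈ rem
  rhoSet_nonempty : (I.rhoSet μ bud q).Nonempty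
  rho_le : ∀ p ∈ rem, (I.rhoSet μ bud p).Nonempty → I.rho μ bud q ≤ I.rho μ bud p

lemma IsMESChoice.rho_le_inv_projVal {rem : Finset π} (hq : I.IsMESChoice μ rem bud q)
    (hμ : IsSat μ) (hrem : rem ⊆ I.projs) (hp : p ∈ rem) (hsupp : (I.supp p).Nonempty)
    (hsplit : I.EqualSplitAffordable bud p) : I.rho μ bud q ≤ (I.projVal μ p)⁻¹ :=
  (hq.rho_le p hp ⟨_, hsplit.inv_projVal_mem_rhoSet hμ (hrem hp) hsupp⟩).trans
    (hsplit.rho_le_inv_projVal hμ (hrem hp) hsupp)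

lemma IsMESChoice.projVal_le {rem : Finset π} (hq : I.IsMESChoice μ rem bud q)
    (hμ : IsSat μ) (hrem : rem ⊆ I.projs) (hp : p ∈ rem) (hsupp : (I.supp p).Nonempty)
    (hsplit : I.EqualSplitAffordable bud p) : I.projVal μ p ≤ I.projVal μ q := by
  have hqproj := hrem hq.mem
  rw [← inv_le_inv₀ (projVal_pos_of_rhoSet_nonempty hqproj hq.rhoSet_nonempty)
    (projVal_pos hμ (hrem hp) hsupp)]
  exact (inv_projVal_le_rho hqproj hq.rhoSet_nonempty).trans
    (hq.rho_le_inv_projVal hμ hrem hp hsupp hsplit)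

end Price

variable [LinearOrder π]

/-! ### Greedy -/

section Greedy

variable {rem : Finset π} {budg : ℝ}

lemma pickMax_mem_filter (f : π → ℝ) (S : Finset π) (h : S.Nonempty) :
    pickMax f S h ∈ S.filter fun p => ∀ q ∈ S, f q ≤ f p :=
  Finset.min'_mem _ _

lemma greedyStep_eq_some (h : I.greedyStep μ rem budg = some q) :
    q ∈ rem ∧ I.cost q ≤ budg ∧
      ∀ p ∈ rem, I.cost p ≤ budg → I.projVal μ p ≤ I.projVal μ q := by
  unfold greedyStep at h
  split_ifs at h with hne
  have hpick := pickMax_mem_filter (I.projVal μ) _ hne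
  rw [Option.some.inj h, Finset.mem_filter, Finset.mem_filter] at hpick
  obtain ⟨⟨hq, hcost⟩, hmax⟩ := hpick
  exact ⟨hq, hcost, fun p hp hpc => hmax p (Finset.mem_filter.2 ⟨hp, hpc⟩)⟩

lemma lt_cost_of_greedyStep_eq_none (h : I.greedyStep μ rem budg = none) (hp : p ∈ rem) :
    budg < I.cost p := by
  unfold greedyStep at h
  split_ifs at h with hne
  exact not_le.1 fun hc => hne ⟨p, Finset.mem_filter.2 ⟨hp, hc⟩⟩

lemma greedyAux_toFinset_subset (k : ℕ) (rem : Finset π) (budg : ℝ) :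
    (I.greedyAux μ k rem budg).toFinset ⊆ rem := by
  fun_induction greedyAux I μ k rem budg with
  | case1 | case2 => simp
  | case3 k rem budg q hstep ih =>
    rw [List.toFinset_cons]
    exact Finset.insert_subset (greedyStep_eq_some hstep).1 (ih.trans (Finset.erase_subset _ _))

lemma notMem_greedyAux_erase (k : ℕ) (rem : Finset π) (budg : ℝ) (q : π) :
    q ∉ (I.greedyAux μ k (rem.erase q) budg).toFinset := fun h =>
  Finset.notMem_erase q rem (greedyAux_toFinset_subset k _ _ h)

lemma costOf_greedyAux_le (k : ℕ) (rem : Finset π) {budg : ℝ} (hbudg : 0 ≤ budg) :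
    I.costOf (I.greedyAux μ k rem budg).toFinset ≤ budg := by
  fun_induction greedyAux I μ k rem budg with
  | case1 | case2 => simpa [costOf] using hbudg
  | case3 k rem budg q hstep ih =>
    have hrest := ih (sub_nonneg.2 (greedyStep_eq_some hstep).2.1)
    rw [List.toFinset_cons, costOf_insert (notMem_greedyAux_erase k rem _ q)]
    linarith

lemma feasibleSet_greedy (I : PB π ν) (μ : ℝ → ℝ) : I.feasibleSet (I.greedy μ) :=
  ⟨greedyAux_toFinset_subset _ _ _, costOf_greedyAux_le _ _ I.budget_pos.le⟩

lemma greedyFrom_subset : I.greedyFrom μ rem budg ⊆ rem :=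
  greedyAux_toFinset_subset _ _ _

-- Until `p` stops being affordable, greedy only picks projects of value at least that of `p`.
lemma lt_costOf_greedyAux_add_cost {k : ℕ} (hrem : rem ⊆ I.projs) (hk : rem.card ≤ k)
    (hp : p ∈ rem) (hpout : p ∉ (I.greedyAux μ k rem budg).toFinset) :
    budg < I.costOf ((I.greedyAux μ k rem budg).toFinset.filter
      fun q => I.projVal μ p ≤ I.projVal μ q) + I.cost p := by
  fun_induction greedyAux I μ k rem budg with
  | case1 => simp_all
  | case2 k rem budg hstep => simpa [costOf] using lt_cost_of_greedyStep_eq_none hstep hp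
  | case3 k rem budg q hstep ih =>
    obtain ⟨hq, -, hmax⟩ := greedyStep_eq_some hstep
    rw [List.toFinset_cons] at hpout ⊢
    obtain ⟨hpq, hpout⟩ := not_or.1 (mt Finset.mem_insert.2 hpout)
    have hchosen := (greedyAux_toFinset_subset (I := I) (μ := μ) k (rem.erase q)
      (budg - I.cost q)).trans (Finset.erase_subset q rem)
    rcases lt_or_ge budg (I.cost p) with hunaffordable | haffordable
    · have := costOf_nonneg ((Finset.filter_subset (fun x => I.projVal μ p ≤ I.projVal μ x) _).trans
        ((Finset.insert_subset hq hchosen).trans hrem))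
      linarith
    have hrest := ih ((Finset.erase_subset _ _).trans hrem)
      (by rw [Finset.card_erase_of_mem hq]; lia) (Finset.mem_erase.2 ⟨hpq, hp⟩) hpout
    have hqnot := mt (Finset.filter_subset (fun x => I.projVal μ p ≤ I.projVal μ x) _ ·)
      (notMem_greedyAux_erase (I := I) (μ := μ) k rem (budg - I.cost q) q)
    rw [Finset.filter_insert, if_pos (hmax p hp haffordable), costOf_insert hqnot]
    linarith

lemma lt_costOf_greedyFrom_add_cost (hrem : rem ⊆ I.projs) (hp : p ∈ rem)
    (hpout : p ∉ I.greedyFrom μ rem budg) :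
    budg < I.costOf ((I.greedyFrom μ rem budg).filter
      fun q => I.projVal μ p ≤ I.projVal μ q) + I.cost p :=
  lt_costOf_greedyAux_add_cost hrem le_rfl hp hpout

end Greedy

/-! ### The run of MES -/

lemma pickMin_mem_filter (f : π → ℝ) (S : Finset π) (h : S.Nonempty) :
    pickMin f S h ∈ S.filter fun p => ∀ q ∈ S, f p ≤ f q :=
  Finset.min'_mem _ _

lemma isMESChoice_of_mesStep_eq_some {rem : Finset π} {bud : ν → ℝ}
    (h : I.mesStep μ rem bud = some q) : I.IsMESChoice μ rem bud q := by
  unfold mesStep at h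
  split_ifs at h with hne
  have hpick := pickMin_mem_filter (I.rho μ bud) _ hne
  rw [Option.some.inj h, Finset.mem_filter, Finset.mem_filter] at hpick
  obtain ⟨⟨hq, hrho⟩, hmin⟩ := hpick
  exact ⟨hq, hrho, fun p hp hpr => hmin p (Finset.mem_filter.2 ⟨hp, hpr⟩)⟩

lemma not_rhoSet_nonempty_of_mesStep_eq_none {rem : Finset π} {bud : ν → ℝ}
    (h : I.mesStep μ rem bud = none) (hp : p ∈ rem) : ¬(I.rhoSet μ bud p).Nonempty := by
  unfold mesStep at h
  split_ifs at h with hne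
  exact fun hr => hne ⟨p, Finset.mem_filter.2 ⟨hp, hr⟩⟩

/-- The projects not chosen by `MES_μ` during its first `k` stages. -/
abbrev mesRem (I : PB π ν) (μ : ℝ → ℝ) (k : ℕ) : Finset π := (I.mesStateAux μ k).1

/-- The personal budgets after `k` stages of `MES_μ`. -/
abbrev mesBud (I : PB π ν) (μ : ℝ → ℝ) (k : ℕ) : ν → ℝ := (I.mesStateAux μ k).2

/-- The projects chosen by `MES_μ` during its first `k` stages. -/
abbrev mesChosen (I : PB π ν) (μ : ℝ → ℝ) (k : ℕ) : Finset π := I.projs \ I.mesRem μ k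

lemma mesStateAux_succ_cases (I : PB π ν) (μ : ℝ → ℝ) (k : ℕ) :
    (I.mesStep μ (I.mesRem μ k) (I.mesBud μ k) = none ∧
      I.mesStateAux μ (k + 1) = I.mesStateAux μ k) ∨
    ∃ q, I.IsMESChoice μ (I.mesRem μ k) (I.mesBud μ k) q ∧
      I.mesStateAux μ (k + 1) =
        ((I.mesRem μ k).erase q, I.mesPay μ (I.mesBud μ k) q) := by
  rw [mesStateAux]
  cases hstep : I.mesStep μ (I.mesRem μ k) (I.mesBud μ k) with
  | none => exact Or.inl ⟨rfl, rfl⟩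
  | some q => exact Or.inr ⟨q, isMESChoice_of_mesStep_eq_some hstep, rfl⟩

lemma mesRem_antitone (I : PB π ν) (μ : ℝ → ℝ) : Antitone (I.mesRem μ) := by
  refine antitone_nat_of_succ_le fun k => ?_
  rcases I.mesStateAux_succ_cases μ k with ⟨-, hk⟩ | ⟨q, -, hk⟩ <;> rw [mesRem, hk]
  exact Finset.erase_subset _ _

lemma mesRem_subset (k : ℕ) : I.mesRem μ k ⊆ I.projs :=
  I.mesRem_antitone μ k.zero_le

lemma mesChosen_subset_mesOutcome {k : ℕ} (hk : k ≤ I.projs.card) :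
    I.mesChosen μ k ⊆ I.mesOutcome μ :=
  Finset.sdiff_subset_sdiff subset_rfl (I.mesRem_antitone μ hk)

lemma mesFinal_fst_subset : (I.mesFinal μ).1 ⊆ I.projs :=
  mesRem_subset _

lemma mem_mesFinal_of_notMem_mesOutcome (hp : p ∈ I.projs) (hpW : p ∉ I.mesOutcome μ) :
    p ∈ (I.mesFinal μ).1 := by
  by_contra h
  exact hpW (Finset.mem_sdiff.2 ⟨hp, h⟩)

lemma mesBud_nonneg (k : ℕ) (i : ν) : 0 ≤ I.mesBud μ k i := by
  induction k with
  | zero => exact div_nonneg I.budget_pos.le (Nat.cast_nonneg _)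
  | succ k ih =>
    rcases I.mesStateAux_succ_cases μ k with ⟨-, hk⟩ | ⟨q, -, hk⟩ <;> rw [mesBud, hk]
    · exact ih
    · exact mesPay_nonneg ih

lemma mesBud_le (hμ : IsSat μ) (k : ℕ) (i : ν) :
    I.mesBud μ k i ≤ I.budget / I.voters.card := by
  induction k with
  | zero => exact le_rfl
  | succ k ih =>
    rcases I.mesStateAux_succ_cases μ k with ⟨-, hk⟩ | ⟨q, hq, hk⟩ <;> rw [mesBud, hk]
    · exact ih
    · have hμq := hμ _ (I.cost_pos q (mesRem_subset k hq.mem))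
      exact (mesPay_le (mesBud_nonneg k i) hμq.le).trans ih

lemma cost_le_of_mem_mesChosen (hμ : IsSat μ) {k : ℕ} (hp : p ∈ I.mesChosen μ k) :
    I.cost p ≤ (I.supp p).card * (I.budget / I.voters.card) := by
  induction k with
  | zero => simp [mesChosen, mesRem, mesStateAux] at hp
  | succ k ih =>
    rcases I.mesStateAux_succ_cases μ k with ⟨-, hk⟩ | ⟨q, hq, hk⟩ <;>
      rw [mesChosen, mesRem, hk] at hp
    · exact ih hp
    · rw [Finset.sdiff_erase (mesRem_subset k hq.mem)] at hp
      rcases Finset.mem_insert.1 hp with rfl | hp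
      · exact cost_le_card_supp_mul_of_rhoSet_nonempty hq.rhoSet_nonempty (mesBud_le hμ k)
      · exact ih hp

lemma mesStep_eq_none_or_card_mesRem_add (I : PB π ν) (μ : ℝ → ℝ) (k : ℕ) :
    I.mesStep μ (I.mesRem μ k) (I.mesBud μ k) = none ∨
      (I.mesRem μ k).card + k = I.projs.card := by
  induction k with
  | zero => exact Or.inr rfl
  | succ k ih =>
    rcases I.mesStateAux_succ_cases μ k with ⟨hstep, hk⟩ | ⟨q, hq, hk⟩ <;>
      rw [mesRem, mesBud, hk]
    · exact Or.inl hstep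
    · rcases ih with hstep | hcard
      · exact absurd hq.rhoSet_nonempty (not_rhoSet_nonempty_of_mesStep_eq_none hstep hq.mem)
      · refine Or.inr ?_
        have := Finset.card_erase_add_one hq.mem
        lia

lemma not_rhoSet_nonempty_of_mem_mesFinal (hp : p ∈ (I.mesFinal μ).1) :
    ¬(I.rhoSet μ (I.mesFinal μ).2 p).Nonempty := by
  rcases I.mesStep_eq_none_or_card_mesRem_add μ I.projs.card with hstep | hcard
  · exact not_rhoSet_nonempty_of_mesStep_eq_none hstep hp
  · have := Finset.card_pos.2 ⟨p, hp⟩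
    rw [mesFinal] at this
    lia

lemma projVal_le_of_mem_mesChosen (hμ : IsSat μ) (hsupp : (I.supp p).Nonempty) {k : ℕ}
    (hp : p ∈ I.mesRem μ k) (hsplit : ∀ j < k, I.EqualSplitAffordable (I.mesBud μ j) p)
    (hq : q ∈ I.mesChosen μ k) : I.projVal μ p ≤ I.projVal μ q := by
  induction k with
  | zero => simp [mesChosen, mesRem, mesStateAux] at hq
  | succ k ih =>
    have hpk := I.mesRem_antitone μ k.le_succ hp
    have ih := ih hpk fun j hj => hsplit j (hj.trans k.lt_succ_self)
    rcases I.mesStateAux_succ_cases μ k with ⟨-, hk⟩ | ⟨x, hx, hk⟩ <;>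
      rw [mesChosen, mesRem, hk] at hq
    · exact ih hq
    · rw [Finset.sdiff_erase (mesRem_subset k hx.mem)] at hq
      rcases Finset.mem_insert.1 hq with rfl | hq
      · exact hx.projVal_le hμ (mesRem_subset k) hpk hsupp (hsplit k k.lt_succ_self)
      · exact ih hq

-- Each stage costs voter `i` at most `μ(q) / v_μ(p)`, where `q` is the project it chooses.
lemma projVal_mul_spent_le (hμ : IsSat μ) (hsupp : (I.supp p).Nonempty) {k : ℕ}
    (hp : p ∈ I.mesRem μ k) (hsplit : ∀ j < k, I.EqualSplitAffordable (I.mesBud μ j) p) (i : ν) :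
    I.projVal μ p * (I.budget / I.voters.card - I.mesBud μ k i) ≤
      ∑ q ∈ I.mesChosen μ k, μ (I.cost q) := by
  induction k with
  | zero => simp [mesChosen, mesRem, mesBud, mesStateAux]
  | succ k ih =>
    have hpk := I.mesRem_antitone μ k.le_succ hp
    have ih := ih hpk fun j hj => hsplit j (hj.trans k.lt_succ_self)
    rcases I.mesStateAux_succ_cases μ k with ⟨-, hk⟩ | ⟨q, hq, hk⟩ <;>
      rw [mesChosen, mesRem, mesBud, hk]
    · exact ih
    have hqproj := mesRem_subset k hq.mem
    have hμq := hμ _ (I.cost_pos q hqproj)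
    have hv := projVal_pos hμ (mesRem_subset k hpk) hsupp
    have hpaid : I.mesBud μ k i - I.mesPay μ (I.mesBud μ k) q i ≤
        (I.projVal μ p)⁻¹ * μ (I.cost q) :=
      (sub_mesPay_le i hμq.le).trans (mul_le_mul_of_nonneg_right (hq.rho_le_inv_projVal hμ
        (mesRem_subset k) hpk hsupp (hsplit k k.lt_succ_self)) hμq.le)
    rw [← div_eq_inv_mul, le_div_iff₀' hv] at hpaid
    rw [Finset.sdiff_erase hqproj,
      Finset.sum_insert fun h => (Finset.mem_sdiff.1 h).2 hq.mem]
    linarith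

-- `H` is the set of projects chosen before some supporter of `p` first becomes budget-limited.
lemma exists_subset_mesOutcome_projVal_mul_le (hμ : IsSat μ) (hsupp : (I.supp p).Nonempty)
    (hp : p ∈ (I.mesFinal μ).1) :
    ∃ H ⊆ I.mesOutcome μ, (∀ q ∈ H, I.projVal μ p ≤ I.projVal μ q) ∧
      I.projVal μ p * (I.budget / I.voters.card) ≤
        ∑ q ∈ H, μ (I.cost q) + μ (I.cost p) := by
  have hpproj := mesFinal_fst_subset hp
  have hfinal : ¬I.EqualSplitAffordable (I.mesBud μ I.projs.card) p := fun h =>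
    not_rhoSet_nonempty_of_mem_mesFinal hp ⟨_, h.inv_projVal_mem_rhoSet hμ hpproj hsupp⟩
  obtain ⟨k, hk, hlimited, hsplit⟩ : ∃ k ≤ I.projs.card,
      ¬I.EqualSplitAffordable (I.mesBud μ k) p ∧
        ∀ j < k, I.EqualSplitAffordable (I.mesBud μ j) p :=
    have hex : ∃ k, ¬I.EqualSplitAffordable (I.mesBud μ k) p := ⟨_, hfinal⟩
    ⟨Nat.find hex, Nat.find_min' hex hfinal, Nat.find_spec hex,
      fun j hj => not_not.1 (Nat.find_min hex hj)⟩
  have hpk := I.mesRem_antitone μ hk hp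
  refine ⟨I.mesChosen μ k, mesChosen_subset_mesOutcome hk,
    fun q hq => projVal_le_of_mem_mesChosen hμ hsupp hpk hsplit hq, ?_⟩
  obtain ⟨i, -, hi⟩ : ∃ i ∈ I.supp p, I.mesBud μ k i < I.cost p / (I.supp p).card := by
    simpa [EqualSplitAffordable] using hlimited
  have hshare : I.projVal μ p * (I.cost p / (I.supp p).card) = μ (I.cost p) := by
    have : (0 : ℝ) < (I.supp p).card := Nat.cast_pos.2 hsupp.card_pos
    rw [← mul_div_assoc, projVal_mul_cost hpproj, mul_div_cancel_left₀ _ this.ne']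
  have hspent := projVal_mul_spent_le hμ hsupp hpk hsplit i
  have hleft := mul_le_mul_of_nonneg_left hi.le (projVal_nonneg hμ hpproj)
  linarith

lemma exists_subset_mesOutcome_projVal_mul_budget_le (hDNS : IsDNS μ)
    (hsupp : (I.supp p).Nonempty) (hp : p ∈ (I.mesFinal μ).1) :
    ∃ H ⊆ I.mesOutcome μ, (∀ q ∈ H, I.projVal μ p ≤ I.projVal μ q) ∧
      I.projVal μ p * I.budget ≤
        I.voters.card * μ I.cmin / I.cmin * (I.costOf H + I.cost p) := by
  obtain ⟨H, hHW, hHval, hHsat⟩ := exists_subset_mesOutcome_projVal_mul_le hDNS.1 hsupp hp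
  refine ⟨H, hHW, hHval, ?_⟩
  have hvoters : (0 : ℝ) < I.voters.card :=
    Nat.cast_pos.2 (hsupp.mono supp_subset_voters).card_pos
  have hH := sum_mu_cost_le_mul_costOf hDNS (hHW.trans Finset.sdiff_subset)
  have hpcost := mu_cost_le_mul_cost hDNS (mesFinal_fst_subset hp)
  rw [← mul_div_assoc, div_le_iff₀' hvoters] at hHsat
  rw [mul_div_assoc, mul_assoc, mul_add]
  exact hHsat.trans (mul_le_mul_of_nonneg_left (add_le_add hH hpcost) hvoters.le)

/-! ### The guarantee -/

lemma completedMES_subset : I.completedMES μ ⊆ I.projs :=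
  Finset.union_subset Finset.sdiff_subset (greedyFrom_subset.trans mesFinal_fst_subset)

lemma card_voters_mul_div_budget_le_of_mem_mesOutcome (hDNS : IsDNS μ)
    (hvoters : 0 < I.voters.card) (hp : p ∈ I.mesOutcome μ) :
    I.voters.card * μ I.cmin / I.budget ≤ I.projVal μ p := by
  refine card_voters_mul_div_budget_le_projVal hDNS (Finset.sdiff_subset hp) ?_
  rw [← le_div_iff₀ (Nat.cast_pos.2 hvoters), mul_div_assoc]
  exact cost_le_of_mem_mesChosen hDNS.1 hp

lemma exists_subset_completedMES_budget_lt (hDNS : IsDNS μ) (hvoters : 0 < I.voters.card)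
    (hp : p ∈ I.projs) (hpX : p ∉ I.completedMES μ) :
    ∃ Y ⊆ I.completedMES μ, I.mesOutcome μ ⊆ Y ∧ I.budget < I.costOf Y + I.cost p ∧
      ∀ q ∈ Y, min (I.projVal μ p) (I.voters.card * μ I.cmin / I.budget) ≤ I.projVal μ q := by
  obtain ⟨hpW, hpG⟩ := not_or.1 (mt Finset.mem_union.2 hpX)
  set G := I.greedyFrom μ (I.mesFinal μ).1 (I.budget - I.costOf (I.mesOutcome μ))
  set F := G.filter fun q => I.projVal μ p ≤ I.projVal μ q
  have hFG : F ⊆ G := Finset.filter_subset _ _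
  have hspent : I.budget - I.costOf (I.mesOutcome μ) < I.costOf F + I.cost p :=
    lt_costOf_greedyFrom_add_cost mesFinal_fst_subset (mem_mesFinal_of_notMem_mesOutcome hp hpW)
      hpG
  have hdisj : Disjoint (I.mesOutcome μ) F :=
    Finset.disjoint_of_subset_right (hFG.trans greedyFrom_subset) Finset.sdiff_disjoint
  refine ⟨I.mesOutcome μ ∪ F, Finset.union_subset_union_right hFG, Finset.subset_union_left, ?_,
    fun q hq => ?_⟩
  · rw [costOf_union hdisj]
    linarith
  · rcases Finset.mem_union.1 hq with hqW | hqF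
    · exact min_le_of_right_le
        (card_voters_mul_div_budget_le_of_mem_mesOutcome hDNS hvoters hqW)
    · exact min_le_of_left_le (Finset.mem_filter.1 hqF).2

lemma guarantee_mul_le_cappedUW_completedMES (hDNS : IsDNS μ) (hp : p ∈ I.projs)
    (hpX : p ∉ I.completedMES μ) :
    (2 * Real.sqrt (I.cmin / I.budget) - (I.cmin + I.cmax) / I.budget) *
        (I.projVal μ p * I.budget) ≤
      I.cappedUW μ (I.projVal μ p) (I.completedMES μ) := by
  have hμ := hDNS.1
  have hv := projVal_nonneg hμ hp
  rcases (I.supp p).eq_empty_or_nonempty with hsupp | hsupp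
  · simpa [projVal, hsupp] using cappedUW_nonneg hμ le_rfl completedMES_subset
  have hvoters : 0 < I.voters.card := (hsupp.mono supp_subset_voters).card_pos
  have hpW : p ∉ I.mesOutcome μ := fun h => hpX (Finset.mem_union_left _ h)
  obtain ⟨H, hHW, hHval, hHcost⟩ := exists_subset_mesOutcome_projVal_mul_budget_le hDNS hsupp
    (mem_mesFinal_of_notMem_mesOutcome hp hpW)
  obtain ⟨Y, hYX, hWY, hYcost, hYval⟩ := exists_subset_completedMES_budget_lt hDNS hvoters hp hpX
  calc (2 * Real.sqrt (I.cmin / I.budget) - (I.cmin + I.cmax) / I.budget) *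
        (I.projVal μ p * I.budget)
      ≤ I.projVal μ p * I.costOf H + min (I.projVal μ p)
          (I.voters.card * μ I.cmin / I.budget) * (I.costOf Y - I.costOf H) :=
        two_mul_sqrt_sub_mul_le_of_costs (mul_pos (Nat.cast_pos.2 hvoters) (hμ _ I.cmin_pos))
          I.cmin_pos hv I.budget_pos (cost_le_cmax hp) hHcost hYcost.le
    _ ≤ I.cappedUW μ (I.projVal μ p) Y :=
        mul_costOf_add_mul_costOf_sub_le_cappedUW (hHW.trans hWY)
          (hYX.trans completedMES_subset) (min_le_left _ _) hHval hYval
    _ ≤ I.cappedUW μ (I.projVal μ p) (I.completedMES μ) :=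
        cappedUW_mono hμ hv hYX completedMES_subset

end PB

theorem mes_over_greedy_general {π ν : Type} [LinearOrder π] (I : PB π ν)
    (μ : ℝ → ℝ) (hDNS : IsDNS μ) {S : Finset π} (hS : I.feasibleSet S) :
    I.uw μ (I.completedMES μ) ≥
      (2 * Real.sqrt (I.cmin / I.budget) - (I.cmin + I.cmax) / I.budget) * I.uw μ S :=
  PB.mul_uw_le_uw_of_le_cappedUW hDNS.1 I.guarantee_le_one PB.completedMES_subset
    (fun _ hp hpX => PB.guarantee_mul_le_cappedUW_completedMES hDNS hp hpX) hS

/-- Comparative guarantee of completed MES over Greedy for DNS functions. -/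
theorem mes_over_greedy {π ν : Type} [LinearOrder π] (I : PB π ν)
    (μ : ℝ → ℝ) (hDNS : IsDNS μ) :
    I.uw μ (I.completedMES μ) ≥
      (2 * Real.sqrt (I.cmin / I.budget) - (I.cmin + I.cmax) / I.budget) *
        I.uw μ (I.greedy μ) :=
  mes_over_greedy_general I μ hDNS (I.feasibleSet_greedy μ)
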